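/- arXiv:0904.1380 — 2 statements merged into one kernel-verified Lean document; each statement's English description precedes it below -/
import Mathlib

section
/- Let G be a group and let (g,h) and (g',h') be Nielsen equivalent generating pairs of G. Then (g,h) is invertible if and only if (g',h') is invertible. -/
/-!
Write `π, π' : F₂ → G` for the homomorphisms of the two pairs, and `ι` for the automorphism of the
free group `F₂` inverting both standard generators. An inversion `α` relative to `(g, h)` is an
automorphism with `α ∘ π = π ∘ ι`. The theorem reduces to a fact about `F₂` (`invertsUpToConj`):
for every generating pair `(a, b)` of `F₂` there is `w` with `ι a = w a⁻¹ w⁻¹` and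
`ι b = w b⁻¹ w⁻¹`. Applied to the images of the standard generators under the automorphism `φ`
giving the Nielsen equivalence, this shows that `α` followed by conjugation by `(π w)⁻¹` is an
inversion relative to `(g', h')`.

The fact about `F₂` is proved by Nielsen reduction. The property is unchanged by swapping, inverting
an entry, multiplying one entry by the other, and simultaneous conjugation, so a counterexample
`(a, b)` may be taken of minimal total length (`MinBad`). Minimality forces cancellation in products
of two letters from `{a, a⁻¹, b, b⁻¹}` to be at most half of either factor, and forces every letter
to survive in part in a product of three. The only delicate case is `a = p q⁻¹` with `|p| = |q|` and
`b = q r p⁻¹`; conjugating `(a, b a)` by `q⁻¹` gives the shorter pair `(q⁻¹ p, r)`. Hence a reduced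
word in at least two letters has length at least two (`mem_of_norm_eq_one`), so the two standard
generators are themselves letters, and `ι` inverts `a` and `b`, a contradiction.

All cancellation arguments are phrased through the Gromov product `gp u v`, the length of
the longest common prefix of the reduced words of `u` and `v`; it satisfies
`|u⁻¹ v| + 2 gp u v = |u| + |v|` and the ultrametric inequality.
-/

/-- Two pairs `(g,h)` and `(g',h')` of elements of a group `G` are Nielsen equivalent
if there is an automorphism `φ` of the free group on two generators such that the
homomorphism determined by `(g',h')` equals the one determined by `(g,h)` composed
with `φ`. -/
def NielsenEquiv {G : Type*} [Group G] (g h g' h' : G) : Prop :=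
  ∃ φ : FreeGroup (Fin 2) ≃* FreeGroup (Fin 2),
    FreeGroup.lift ![g', h'] = (FreeGroup.lift ![g, h]).comp φ.toMonoidHom

namespace NielsenInversion

open FreeGroup hiding map_mul map_inv

/-! ### Common prefixes and the Gromov product -/

/-- The length of the longest common prefix of two lists. -/
def lcp {β : Type*} [DecidableEq β] : List β → List β → ℕ
  | x :: l, y :: m => if x = y then lcp l m + 1 else 0
  | _, _ => 0

lemma lcp_comm {β : Type*} [DecidableEq β] (l m : List β) : lcp l m = lcp m l := by
  induction l generalizing m with
  | nil => cases m <;> simp [lcp]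
  | cons x l ih =>
    cases m with
    | nil => simp [lcp]
    | cons y m => simp only [lcp, ih m, eq_comm]

lemma lcp_ultra {β : Type*} [DecidableEq β] (l m n : List β) :
    min (lcp l m) (lcp m n) ≤ lcp l n := by
  induction l generalizing m n with
  | nil => simp [lcp]
  | cons x l ih =>
    cases m with
    | nil => simp [lcp]
    | cons y m =>
      cases n with
      | nil => simp [lcp]
      | cons z n =>
        have := ih m n
        simp only [lcp]
        split_ifs <;> simp_all

lemma lcp_le {β : Type*} [DecidableEq β] (l m : List β) : lcp l m ≤ l.length := by
  induction l generalizing m with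
  | nil => simp [lcp]
  | cons x l ih =>
    cases m with
    | nil => simp [lcp]
    | cons y m =>
      have := ih m
      simp only [lcp, List.length_cons]
      split_ifs <;> omega

lemma isReduced_invRev {l : List (Fin 2 × Bool)} (h : IsReduced l) : IsReduced (invRev l) := by
  rw [isReduced_iff_reduce_eq] at h ⊢
  rw [reduce_invRev, h]

lemma length_reduce_invRev_append (l m : List (Fin 2 × Bool)) (hl : IsReduced l)
    (hm : IsReduced m) :
    (reduce (invRev l ++ m)).length + 2 * lcp l m = l.length + m.length := by
  induction l generalizing m with
  | nil => simp [lcp, hm.reduce_eq]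
  | cons x l ih =>
    cases m with
    | nil =>
      simp only [List.append_nil, (isReduced_invRev hl).reduce_eq, invRev_length]
      simp [lcp]
    | cons y m =>
      by_cases hxy : x = y
      · subst hxy
        have hl' : IsReduced l := hl.infix ⟨[x], [], by simp⟩
        have hm' : IsReduced m := hm.infix ⟨[x], [], by simp⟩
        have h1 : reduce (invRev (x :: l) ++ x :: m) = reduce (invRev l ++ m) := by
          apply reduce.sound
          rw [← mul_mk, ← mul_mk, ← inv_mk, ← inv_mk, ← List.singleton_append (l := l),
            ← List.singleton_append (l := m), ← mul_mk, ← mul_mk]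
          group
        rw [h1]
        have := ih m hl' hm'
        simp only [lcp, if_true, List.length_cons]
        omega
      · have h1 : IsReduced (invRev (x :: l) ++ y :: m) := by
          refine List.IsChain.append (isReduced_invRev hl) hm ?_
          rcases x with ⟨x, e⟩
          rcases y with ⟨y, f⟩
          simp [invRev]
          intro h
          subst h
          simp at hxy
          cases e <;> cases f <;> simp_all
        rw [h1.reduce_eq]
        simp [lcp, hxy]

/-- The Gromov product of `u` and `v` based at `1` in the Cayley tree of the free group: the length
of the longest common prefix of their reduced words. -/
def gp (u v : FreeGroup (Fin 2)) : ℕ := lcp u.toWord v.toWord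

lemma gp_comm (u v : FreeGroup (Fin 2)) : gp u v = gp v u := lcp_comm _ _

lemma gp_ultra (u v w : FreeGroup (Fin 2)) : min (gp u v) (gp v w) ≤ gp u w := lcp_ultra _ _ _

lemma gp_le (u v : FreeGroup (Fin 2)) : gp u v ≤ FreeGroup.norm u := lcp_le _ _

lemma norm_inv_mul (u v : FreeGroup (Fin 2)) :
    FreeGroup.norm (u⁻¹ * v) + 2 * gp u v = FreeGroup.norm u + FreeGroup.norm v := by
  unfold FreeGroup.norm gp
  rw [toWord_mul, toWord_inv]
  exact length_reduce_invRev_append _ _ isReduced_toWord isReduced_toWord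

lemma norm_mul (u v : FreeGroup (Fin 2)) :
    FreeGroup.norm (u * v) + 2 * gp u⁻¹ v = FreeGroup.norm u + FreeGroup.norm v := by
  have := norm_inv_mul u⁻¹ v
  rwa [inv_inv, norm_inv_eq] at this

lemma exists_prefix (a : FreeGroup (Fin 2)) (k : ℕ) (hk : k ≤ FreeGroup.norm a) :
    ∃ p, FreeGroup.norm p = k ∧ FreeGroup.norm (p⁻¹ * a) + k = FreeGroup.norm a := by
  have ha : IsReduced a.toWord := isReduced_toWord
  have h1 : IsReduced (a.toWord.take k) :=
    ha.infix ⟨[], a.toWord.drop k, by simp⟩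
  have h2 : IsReduced (a.toWord.drop k) :=
    ha.infix ⟨a.toWord.take k, [], by simp⟩
  have h3 : a = mk (a.toWord.take k) * mk (a.toWord.drop k) := by
    rw [mul_mk, List.take_append_drop, mk_toWord]
  unfold FreeGroup.norm at hk
  refine ⟨mk (a.toWord.take k), ?_, ?_⟩
  · simp [FreeGroup.norm, h1.reduce_eq, hk]
  · have : (mk (a.toWord.take k))⁻¹ * a = mk (a.toWord.drop k) := by
      rw [inv_mul_eq_iff_eq_mul]; exact h3
    rw [this]
    simp only [FreeGroup.norm, toWord_mk, h2.reduce_eq, List.length_drop]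
    omega

/-- Writing the reduced word of `a` as `c r c⁻¹` with `r` cyclically reduced and nonempty, the
square has reduced word `c r r c⁻¹`. -/
lemma norm_lt_norm_mul_self {a : FreeGroup (Fin 2)} (ha : a ≠ 1) : FreeGroup.norm a < FreeGroup.norm (a * a) := by
  have h := reduceCyclically.reduce_flatten_replicate_succ (isReduced_toWord (x := a)) 1
  have h0 := reduceCyclically.conj_conjugator_reduceCyclically a.toWord
  have hne : reduceCyclically a.toWord ≠ [] := by
    intro hr
    rw [hr] at h0
    apply ha
    rw [← mk_toWord (x := a), ← h0, ← mul_mk, ← mul_mk, ← inv_mk, ← one_eq_mk]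
    group
  have h2 : a.toWord.length = _ := congrArg List.length h0.symm
  have h3 : (a * a).toWord = _ := (toWord_mul a a).trans (by simpa using h)
  have hpos := List.length_pos_iff.mpr hne
  unfold FreeGroup.norm
  rw [h3, h2]
  simp
  omega

lemma two_gp_self_lt {a : FreeGroup (Fin 2)} (ha : a ≠ 1) : 2 * gp a⁻¹ a < FreeGroup.norm a := by
  have h1 := norm_lt_norm_mul_self ha
  have h2 := norm_mul a a
  omega

/-! ### Words in a Nielsen reduced set -/

/-- `RedWord S g t`: the element `g` is a nonempty product of letters from `S`, no two consecutive
ones being mutually inverse, with last letter `t`. -/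
inductive RedWord (S : Set (FreeGroup (Fin 2))) :
    FreeGroup (Fin 2) → FreeGroup (Fin 2) → Prop
  | single (s) : s ∈ S → RedWord S s s
  | snoc (g t u) : RedWord S g t → u ∈ S → t * u ≠ 1 → RedWord S (g * u) u

section Reduced

variable {S : Set (FreeGroup (Fin 2))}

lemma exists_redWord (hinv : ∀ s ∈ S, s⁻¹ ∈ S) {x : FreeGroup (Fin 2)}
    (hx : x ∈ Subgroup.closure S) : x = 1 ∨ ∃ t, RedWord S x t := by
  have key : ∀ x u, u ∈ S → (x = 1 ∨ ∃ t, RedWord S x t) →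
      (x * u = 1 ∨ ∃ t, RedWord S (x * u) t) := by
    rintro x u hu (rfl | ⟨t, ht⟩)
    · exact Or.inr ⟨u, by simpa using RedWord.single u hu⟩
    · by_cases htu : t * u = 1
      · cases ht with
        | single _ hs => exact Or.inl htu
        | snoc g s _ hg ht hst =>
          right
          rw [mul_assoc, htu, mul_one]
          exact ⟨s, hg⟩
      · exact Or.inr ⟨u, RedWord.snoc _ _ _ ht hu htu⟩
  induction hx using Subgroup.closure_induction_right with
  | one => exact Or.inl rfl
  | mul_right x _ y hy ih => exact key x y hy ih
  | mul_inv_cancel x _ y hy ih => exact key x y⁻¹ (hinv y hy) ih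

/-- Local-to-global principle: in a Nielsen reduced set the cancellation of a reduced word against
a further letter is determined by the last letter, so lengths never drop as letters are added. -/
lemma RedWord.spec
    (h1 : ∀ s ∈ S, ∀ t ∈ S, s * t ≠ 1 → 2 * gp s⁻¹ t ≤ FreeGroup.norm s ∧ 2 * gp s⁻¹ t ≤ FreeGroup.norm t)
    (h2 : ∀ s ∈ S, ∀ t ∈ S, ∀ u ∈ S, s * t ≠ 1 → t * u ≠ 1 →
      gp s⁻¹ t + gp t⁻¹ u < FreeGroup.norm t)
    (hne : ∀ s ∈ S, s ≠ 1) {g t : FreeGroup (Fin 2)} (h : RedWord S g t) :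
    t ∈ S ∧ (∀ u ∈ S, t * u ≠ 1 → gp g⁻¹ u = gp t⁻¹ u) ∧ (g = t ∨ 2 ≤ FreeGroup.norm g) := by
  induction h with
  | single s hs => exact ⟨hs, fun _ _ _ => rfl, Or.inl rfl⟩
  | snoc g s t hg ht hst ih =>
    obtain ⟨hs, hgp, hlen⟩ := ih
    have e0 := hgp t ht hst
    have e1 := norm_mul g t
    have e2 := h1 s hs t ht hst
    refine ⟨ht, fun u hu htu => ?_, Or.inr ?_⟩
    · have e3 := norm_inv_mul t⁻¹ (g * t)⁻¹
      have e4 : (t⁻¹)⁻¹ * (g * t)⁻¹ = g⁻¹ := by group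
      rw [e4, norm_inv_eq, norm_inv_eq, norm_inv_eq] at e3
      have e5 := h2 s hs t ht u hu hst htu
      have e6 := gp_ultra (g * t)⁻¹ t⁻¹ u
      have e7 := gp_ultra t⁻¹ (g * t)⁻¹ u
      rw [gp_comm (g * t)⁻¹ t⁻¹] at e6
      omega
    · have ns : FreeGroup.norm s ≠ 0 := fun h => hne s hs (norm_eq_zero.mp h)
      have nt : FreeGroup.norm t ≠ 0 := fun h => hne t ht (norm_eq_zero.mp h)
      rcases hlen with rfl | hlen <;> omega

lemma mem_of_norm_eq_one (hinv : ∀ s ∈ S, s⁻¹ ∈ S)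
    (h1 : ∀ s ∈ S, ∀ t ∈ S, s * t ≠ 1 → 2 * gp s⁻¹ t ≤ FreeGroup.norm s ∧ 2 * gp s⁻¹ t ≤ FreeGroup.norm t)
    (h2 : ∀ s ∈ S, ∀ t ∈ S, ∀ u ∈ S, s * t ≠ 1 → t * u ≠ 1 →
      gp s⁻¹ t + gp t⁻¹ u < FreeGroup.norm t)
    (hne : ∀ s ∈ S, s ≠ 1) {x : FreeGroup (Fin 2)} (hx : x ∈ Subgroup.closure S)
    (hx1 : FreeGroup.norm x = 1) : x ∈ S := by
  rcases exists_redWord hinv hx with rfl | ⟨t, ht⟩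
  · simp at hx1
  · obtain ⟨hS, -, rfl | h⟩ := ht.spec h1 h2 hne
    · exact hS
    · omega

end Reduced

/-! ### The standard inversion and Nielsen moves -/

/-- The endomorphism of `F₂` sending each standard generator to its inverse. -/
def iota : FreeGroup (Fin 2) →* FreeGroup (Fin 2) := FreeGroup.lift fun i => (of i)⁻¹

/-- If `(a, b)` generates `F₂`, then `ι` inverts `a` and `b` up to a common conjugation. -/
def Good (a b : FreeGroup (Fin 2)) : Prop :=
  Subgroup.closure {a, b} = ⊤ →
    ∃ w, iota a = w * a⁻¹ * w⁻¹ ∧ iota b = w * b⁻¹ * w⁻¹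

lemma closure_eq_top {a b a' b' : FreeGroup (Fin 2)} (h : Subgroup.closure {a, b} = ⊤)
    (ha : a ∈ Subgroup.closure {a', b'}) (hb : b ∈ Subgroup.closure {a', b'}) :
    Subgroup.closure {a', b'} = ⊤ := by
  rw [eq_top_iff, ← h, Subgroup.closure_le]
  rintro x (rfl | rfl)
  · exact ha
  · exact hb

lemma mem_left (a b : FreeGroup (Fin 2)) : a ∈ Subgroup.closure {a, b} :=
  Subgroup.subset_closure (by simp)

lemma mem_right (a b : FreeGroup (Fin 2)) : b ∈ Subgroup.closure {a, b} :=
  Subgroup.subset_closure (by simp)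

lemma Good.swap {a b : FreeGroup (Fin 2)} (h : Good b a) : Good a b := by
  intro hc
  rw [Set.pair_comm] at hc
  obtain ⟨w, h1, h2⟩ := h hc
  exact ⟨w, h2, h1⟩

lemma Good.inv {a b : FreeGroup (Fin 2)} (h : Good a⁻¹ b) : Good a b := by
  intro hc
  obtain ⟨w, h1, h2⟩ := h (closure_eq_top hc (by
    simpa using inv_mem (mem_left a⁻¹ b)) (mem_right _ _))
  refine ⟨w, ?_, h2⟩
  rw [map_inv, inv_eq_iff_eq_inv] at h1
  rw [h1]
  group

lemma Good.mul {a b : FreeGroup (Fin 2)} (h : Good a (a * b)) : Good a b := by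
  intro hc
  obtain ⟨w, h1, h2⟩ := h (closure_eq_top hc (mem_left _ _) (by
    simpa using mul_mem (inv_mem (mem_left a (a * b))) (mem_right a (a * b))))
  refine ⟨w * a, ?_, ?_⟩
  · rw [h1]; group
  · rw [map_mul, ← eq_inv_mul_iff_mul_eq, h1] at h2
    rw [h2]; group

lemma Good.conj {a b : FreeGroup (Fin 2)} (v : FreeGroup (Fin 2))
    (h : Good (v * a * v⁻¹) (v * b * v⁻¹)) : Good a b := by
  intro hc
  have hc' : Subgroup.closure {v * a * v⁻¹, v * b * v⁻¹} = ⊤ := by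
    have := congrArg (Subgroup.map (MulAut.conj v).toMonoidHom) hc
    rw [MonoidHom.map_closure, Subgroup.map_top_of_surjective _ (MulAut.conj v).surjective] at this
    simpa [Set.image_pair] using this
  obtain ⟨w, h1, h2⟩ := h hc'
  simp only [map_mul, map_inv] at h1 h2
  refine ⟨(iota v)⁻¹ * w * v, ?_, ?_⟩
  · calc iota a = (iota v)⁻¹ * (iota v * iota a * (iota v)⁻¹) * iota v := by group
      _ = _ := by rw [h1]; group
  · calc iota b = (iota v)⁻¹ * (iota v * iota b * (iota v)⁻¹) * iota v := by group
      _ = _ := by rw [h2]; group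

lemma Good.mul' {a b : FreeGroup (Fin 2)} (h : Good a (b * a)) : Good a b := by
  apply Good.mul
  apply Good.conj a⁻¹
  convert h using 1 <;> group

/-! ### A minimal counterexample is Nielsen reduced -/

/-- `(a, b)` is a counterexample to `Good` of minimal total length. -/
def MinBad (a b : FreeGroup (Fin 2)) : Prop :=
  ¬ Good a b ∧ ∀ a' b', ¬ Good a' b' → FreeGroup.norm a + FreeGroup.norm b ≤ FreeGroup.norm a' + FreeGroup.norm b'

variable {a b : FreeGroup (Fin 2)}

lemma MinBad.swap (h : MinBad a b) : MinBad b a :=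
  ⟨fun hg => h.1 hg.swap, fun a' b' hg => by have := h.2 a' b' hg; omega⟩

lemma MinBad.inv (h : MinBad a b) : MinBad a⁻¹ b :=
  ⟨fun hg => h.1 hg.inv, fun a' b' hg => by rw [norm_inv_eq]; exact h.2 a' b' hg⟩

lemma MinBad.inv_right (h : MinBad a b) : MinBad a b⁻¹ := h.swap.inv.swap

lemma MinBad.ne_one (h : MinBad a b) : a ≠ 1 := by
  rintro rfl
  apply h.1
  intro hc
  exfalso
  have hmem : ∀ x : FreeGroup (Fin 2), x ∈ Subgroup.zpowers b := by
    intro x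
    have hx : x ∈ Subgroup.closure {1, b} := by rw [hc]; trivial
    rwa [Subgroup.closure_insert_one, ← Subgroup.zpowers_eq_closure] at hx
  obtain ⟨m, hm⟩ := hmem (of 0)
  obtain ⟨n, hn⟩ := hmem (of 1)
  have : (of 0 : FreeGroup (Fin 2)) * of 1 = of 1 * of 0 := by
    rw [← hm, ← hn]
    exact (Commute.zpow_zpow_self b m n).eq
  revert this
  decide

lemma MinBad.two_gp_le_left (h : MinBad a b) : 2 * gp a⁻¹ b ≤ FreeGroup.norm a := by
  have h1 := h.2 a (a * b) (fun hg => h.1 hg.mul)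
  have h2 := norm_mul a b
  omega

lemma MinBad.two_gp_le_right (h : MinBad a b) : 2 * gp a⁻¹ b ≤ FreeGroup.norm b := by
  have h1 := h.2 b (a * b) (fun hg => h.swap.1 hg.mul')
  have h2 := norm_mul a b
  omega

/-- The letters `a`, `a⁻¹`, `b`, `b⁻¹`. -/
def letters (a b : FreeGroup (Fin 2)) : Set (FreeGroup (Fin 2)) := {a, a⁻¹, b, b⁻¹}

lemma mem_letters {s : FreeGroup (Fin 2)} :
    s ∈ letters a b ↔ s = a ∨ s = a⁻¹ ∨ s = b ∨ s = b⁻¹ := by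
  simp [letters]

lemma letters_swap : letters b a = letters a b := by
  ext s; simp only [mem_letters]; tauto

lemma letters_inv : letters a⁻¹ b = letters a b := by
  ext s; simp only [mem_letters, inv_inv]; tauto

lemma inv_mem_letters {s : FreeGroup (Fin 2)} (hs : s ∈ letters a b) : s⁻¹ ∈ letters a b := by
  rw [mem_letters] at hs ⊢
  rcases hs with rfl | rfl | rfl | rfl <;> simp

/-- A statement about a letter of a minimal counterexample need only be checked for `a`. -/
lemma MinBad.wlog (h : MinBad a b) {t : FreeGroup (Fin 2)} (ht : t ∈ letters a b) :
    ∃ b', MinBad t b' ∧ letters t b' = letters a b := by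
  rcases mem_letters.mp ht with rfl | rfl | rfl | rfl
  · exact ⟨b, h, rfl⟩
  · exact ⟨b, h.inv, letters_inv⟩
  · exact ⟨a, h.swap, letters_swap⟩
  · exact ⟨a, h.swap.inv, letters_inv.trans letters_swap⟩

lemma MinBad.half (h : MinBad a b) {u : FreeGroup (Fin 2)} (hu : u ∈ letters a b)
    (hau : a * u ≠ 1) : 2 * gp a⁻¹ u ≤ FreeGroup.norm a ∧ 2 * gp a⁻¹ u ≤ FreeGroup.norm u := by
  rcases mem_letters.mp hu with rfl | rfl | rfl | rfl
  · have := two_gp_self_lt h.ne_one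
    omega
  · simp at hau
  · exact ⟨h.two_gp_le_left, h.two_gp_le_right⟩
  · exact ⟨h.inv_right.two_gp_le_left, h.inv_right.two_gp_le_right⟩

/-- The case `a = p q⁻¹`, `b = q r p⁻¹` with `|p| = |q|` does not occur: there the pair
`(q⁻¹ a q, q⁻¹ (b a) q) = (q⁻¹ p, r)` is shorter. -/
lemma MinBad.not_both_half (h : MinBad a b) (h1 : 2 * gp b⁻¹ a = FreeGroup.norm a)
    (h2 : 2 * gp a⁻¹ b = FreeGroup.norm a) : False := by
  obtain ⟨k, hk⟩ : ∃ k, FreeGroup.norm a = 2 * k := ⟨_, h1.symm⟩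
  obtain ⟨p, hp, hpa⟩ := exists_prefix a k (by omega)
  obtain ⟨q, rfl⟩ : ∃ q, a = p * q⁻¹ := ⟨a⁻¹ * p, by group⟩
  rw [inv_mul_cancel_left, norm_inv_eq] at hpa
  have hb := h.two_gp_le_right
  have ha : FreeGroup.norm (p * q⁻¹) ≠ 0 := fun h0 => h.ne_one (norm_eq_zero.mp h0)
  have g1 : k ≤ gp p (p * q⁻¹) := by
    have := norm_inv_mul p (p * q⁻¹)
    rw [inv_mul_cancel_left, norm_inv_eq] at this
    omega
  have g2 : k ≤ gp q (p * q⁻¹)⁻¹ := by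
    have := norm_inv_mul q (p * q⁻¹)⁻¹
    rw [show q⁻¹ * (p * q⁻¹)⁻¹ = p⁻¹ by group, norm_inv_eq, norm_inv_eq] at this
    omega
  have g3 := gp_ultra b⁻¹ (p * q⁻¹) p
  rw [gp_comm _ p] at g3
  have g4 := gp_ultra q (p * q⁻¹)⁻¹ b
  have g5 := norm_mul b p
  have g6 := gp_le p b⁻¹
  rw [gp_comm] at g6
  have g7 := norm_inv_mul b (b * p)
  rw [inv_mul_cancel_left] at g7
  have g8 := gp_ultra q b (b * p)
  have g9 := norm_inv_mul q (b * p)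
  have g10 := norm_inv_mul q p
  have hnew := h.2 (q⁻¹ * p) (q⁻¹ * (b * p)) (fun hg => h.1 (Good.mul' (Good.conj q⁻¹ (by
    convert hg using 1 <;> group))))
  omega

lemma MinBad.middle (h : MinBad a b) {s u : FreeGroup (Fin 2)} (hs : s ∈ letters a b)
    (hu : u ∈ letters a b) (hsa : s * a ≠ 1) (hau : a * u ≠ 1) :
    gp s⁻¹ a + gp a⁻¹ u < FreeGroup.norm a := by
  have hself := two_gp_self_lt h.ne_one
  have e1 := (h.half hu hau).1
  have e2 : 2 * gp s⁻¹ a ≤ FreeGroup.norm a := by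
    have := (h.inv.half (u := s⁻¹) (by rw [letters_inv]; exact inv_mem_letters hs)
      (fun h0 => hsa (by rw [← inv_inj, mul_inv_rev, h0, inv_one]))).1
    rwa [inv_inv, gp_comm, norm_inv_eq] at this
  by_contra hcon
  have e3 : 2 * gp s⁻¹ a = FreeGroup.norm a := by omega
  have e4 : 2 * gp a⁻¹ u = FreeGroup.norm a := by omega
  -- Adjacent letters `s` and `s⁻¹` would make `a` cancel half of itself in `a * a`.
  have opp : u ≠ s⁻¹ := by
    rintro rfl
    have := gp_ultra a⁻¹ s⁻¹ a
    omega
  rcases mem_letters.mp hs with rfl | rfl | rfl | rfl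
  · omega
  · simp at hsa
  · rcases mem_letters.mp hu with rfl | rfl | rfl | rfl
    · omega
    · simp at hau
    · exact h.not_both_half e3 e4
    · exact opp rfl
  · rcases mem_letters.mp hu with rfl | rfl | rfl | rfl
    · omega
    · simp at hau
    · simp at opp
    · exact h.inv_right.not_both_half e3 e4

lemma MinBad.norm_one_mem (h : MinBad a b) (hc : Subgroup.closure {a, b} = ⊤)
    {x : FreeGroup (Fin 2)} (hx : FreeGroup.norm x = 1) : x ∈ letters a b := by
  refine mem_of_norm_eq_one (fun s => inv_mem_letters) ?_ ?_ ?_ ?_ hx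
  · intro s hs t ht hst
    obtain ⟨b', h', hl⟩ := h.wlog hs
    exact h'.half (hl ▸ ht) hst
  · intro s hs t ht u hu hst htu
    obtain ⟨b', h', hl⟩ := h.wlog ht
    exact h'.middle (hl ▸ hs) (hl ▸ hu) hst htu
  · intro s hs
    obtain ⟨b', h', -⟩ := h.wlog hs
    exact h'.ne_one
  · have : Subgroup.closure {a, b} ≤ Subgroup.closure (letters a b) :=
      Subgroup.closure_mono (by rintro x (rfl | rfl) <;> simp [letters])
    exact this (by rw [hc]; trivial)

lemma MinBad.false (h : MinBad a b) : False := by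
  apply h.1
  intro hc
  have i0 : iota (of 0) = (of 0)⁻¹ := by simp [iota]
  have i1 : iota (of 1) = (of 1)⁻¹ := by simp [iota]
  have d1 : (of 0 : FreeGroup (Fin 2)) ≠ of 1 := by decide
  have d2 : (of 0 : FreeGroup (Fin 2)) ≠ (of 1)⁻¹ := by decide
  have key : ∀ {i : Fin 2} {c : FreeGroup (Fin 2)}, iota (of i) = (of i)⁻¹ →
      (of i = c ∨ of i = c⁻¹) → iota c = c⁻¹ := by
    rintro i c hi (rfl | hc)
    · exact hi
    · rw [hc, map_inv, inv_inj] at hi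
      exact hi
  have m0 := mem_letters.mp (h.norm_one_mem hc (norm_of (0 : Fin 2)))
  have m1 := mem_letters.mp (h.norm_one_mem hc (norm_of (1 : Fin 2)))
  have notBoth : ∀ c : FreeGroup (Fin 2), (of 0 = c ∨ of 0 = c⁻¹) →
      (of 1 = c ∨ of 1 = c⁻¹) → False := by
    rintro c (h0 | h0) (h1 | h1)
    · exact d1 (h0.trans h1.symm)
    · exact d2 (by rw [h1, inv_inv, h0])
    · exact d2 (by rw [h1, h0])
    · exact d1 (h0.trans h1.symm)
  refine ⟨1, ?_⟩
  simp only [one_mul, inv_one, mul_one]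
  rw [← or_assoc] at m0 m1
  rcases m0 with m0 | m0 <;> rcases m1 with m1 | m1
  · exact (notBoth _ m0 m1).elim
  · exact ⟨key i0 m0, key i1 m1⟩
  · exact ⟨key i1 m1, key i0 m0⟩
  · exact (notBoth _ m0 m1).elim

theorem invertsUpToConj (a b : FreeGroup (Fin 2)) : Good a b := by
  by_contra hbad
  let len : FreeGroup (Fin 2) × FreeGroup (Fin 2) → ℕ := fun p => FreeGroup.norm p.1 + FreeGroup.norm p.2
  let bad : Set (FreeGroup (Fin 2) × FreeGroup (Fin 2)) := {p | ¬ Good p.1 p.2}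
  have hne : bad.Nonempty := ⟨(a, b), hbad⟩
  obtain ⟨p, hp, hmin⟩ : ∃ p ∈ bad, ∀ q ∈ bad, len p ≤ len q :=
    ⟨Function.argminOn len bad hne, Function.argminOn_mem len bad hne,
      fun q hq => Function.argminOn_le len bad hq⟩
  exact MinBad.false (a := p.1) (b := p.2) ⟨hp, fun a' b' h => hmin (a', b') h⟩

/-! ### Transport along a Nielsen equivalence -/

lemma invertible_of_nielsenEquiv {G : Type*} [Group G] {g h g' h' : G}
    (hN : NielsenEquiv g h g' h') (hα : ∃ α : G ≃* G, α g = g⁻¹ ∧ α h = h⁻¹) :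
    ∃ α : G ≃* G, α g' = g'⁻¹ ∧ α h' = h'⁻¹ := by
  obtain ⟨φ, hφ⟩ := hN
  obtain ⟨α, hg, hh⟩ := hα
  have hc : Subgroup.closure {φ (of 0), φ (of 1)} = ⊤ := by
    have h0 : Subgroup.closure (Set.range (of : Fin 2 → FreeGroup (Fin 2))) = ⊤ :=
      FreeGroup.closure_range_of _
    have := congrArg (Subgroup.map φ.toMonoidHom) h0
    rw [MonoidHom.map_closure, Subgroup.map_top_of_surjective _ φ.surjective] at this
    rw [← this]
    congr 1
    ext x
    simp [eq_comm]
  obtain ⟨w, h0, h1⟩ := invertsUpToConj _ _ hc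
  have hι : ∀ u, α (FreeGroup.lift ![g, h] u) = FreeGroup.lift ![g, h] (iota u) := by
    intro u
    have : α.toMonoidHom.comp (FreeGroup.lift ![g, h]) = (FreeGroup.lift ![g, h]).comp iota := by
      ext i
      fin_cases i <;> simp [iota, hg, hh]
    exact DFunLike.congr_fun this u
  have eg : g' = FreeGroup.lift ![g, h] (φ (of 0)) := by
    simpa using DFunLike.congr_fun hφ (of 0)
  have eh : h' = FreeGroup.lift ![g, h] (φ (of 1)) := by
    simpa using DFunLike.congr_fun hφ (of 1)
  refine ⟨α.trans (MulAut.conj (FreeGroup.lift ![g, h] w)⁻¹), ?_, ?_⟩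
  · rw [MulEquiv.trans_apply, eg, hι, h0, MulAut.conj_apply]
    simp only [map_mul, map_inv]
    group
  · rw [MulEquiv.trans_apply, eh, hι, h1, MulAut.conj_apply]
    simp only [map_mul, map_inv]
    group

lemma nielsenEquiv_symm {G : Type*} [Group G] {g h g' h' : G} (hN : NielsenEquiv g h g' h') :
    NielsenEquiv g' h' g h := by
  obtain ⟨φ, hφ⟩ := hN
  refine ⟨φ.symm, ?_⟩
  rw [hφ]
  ext i
  simp

end NielsenInversion

theorem stmt0 {G : Type*} [Group G] (g h g' h' : G)
    (hgen : Subgroup.closure {g, h} = ⊤)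
    (hgen' : Subgroup.closure {g', h'} = ⊤)
    (hN : NielsenEquiv g h g' h') :
    (∃ α : G ≃* G, α g = g⁻¹ ∧ α h = h⁻¹) ↔
      (∃ α : G ≃* G, α g' = g'⁻¹ ∧ α h' = h'⁻¹) := by
  exact ⟨NielsenInversion.invertible_of_nielsenEquiv hN,
    NielsenInversion.invertible_of_nielsenEquiv (NielsenInversion.nielsenEquiv_symm hN)⟩
end

section
/- Let (p,q,r) be one of the triples (3,3,3), (2,3,6), (2,4,4), and let G = Δ(p,q,r) be the corresponding Euclidean triangle group with generators s₁, s₂. Then every generating pair of G is Nielsen equivalent to (s₁, s₂). -/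
/-- Relators of the triangle group Δ(p,q,r). -/
def triangleRels (p q r : ℕ) : Set (FreeGroup (Fin 2)) :=
  {FreeGroup.of 0 ^ p, FreeGroup.of 1 ^ q, (FreeGroup.of 0 * FreeGroup.of 1) ^ r}

/-- The triangle group Δ(p,q,r) = ⟨s₁,s₂ | s₁^p, s₂^q, (s₁s₂)^r⟩. -/
abbrev Triangle (p q r : ℕ) := PresentedGroup (triangleRels p q r)

/-- The generator s₁ of Δ(p,q,r). -/
def t₁ (p q r : ℕ) : Triangle p q r := PresentedGroup.of 0

/-- The generator s₂ of Δ(p,q,r). -/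
def t₂ (p q r : ℕ) : Triangle p q r := PresentedGroup.of 1

/-! ### Nielsen equivalence -/

section Nielsen

variable {G : Type*} [Group G]

theorem NielsenEquiv.trans {a b c d e f : G} (h₁ : NielsenEquiv a b c d)
    (h₂ : NielsenEquiv c d e f) : NielsenEquiv a b e f := by
  obtain ⟨φ, hφ⟩ := h₁
  obtain ⟨ψ, hψ⟩ := h₂
  exact ⟨ψ.trans φ, by rw [hψ, hφ]; rfl⟩

theorem NielsenEquiv.symm {a b c d : G} (h : NielsenEquiv a b c d) : NielsenEquiv c d a b := by
  obtain ⟨φ, hφ⟩ := h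
  refine ⟨φ.symm, ?_⟩
  rw [hφ]
  ext x
  simp

/-- A pair of words `(u 0, u 1)` that can be undone by a pair `(v 0, v 1)` defines a Nielsen
transformation. -/
theorem nielsenEquiv_of_words (g h : G) (u v : Fin 2 → FreeGroup (Fin 2))
    (huv : ∀ i, FreeGroup.lift u (v i) = FreeGroup.of i)
    (hvu : ∀ i, FreeGroup.lift v (u i) = FreeGroup.of i) :
    NielsenEquiv g h (FreeGroup.lift ![g, h] (u 0)) (FreeGroup.lift ![g, h] (u 1)) := by
  refine ⟨MonoidHom.toMulEquiv (FreeGroup.lift u) (FreeGroup.lift v) ?_ ?_, ?_⟩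
  · ext i; simp [hvu]
  · ext i; simp [huv]
  · ext i
    fin_cases i <;> simp

theorem nielsenEquiv_swap (g h : G) : NielsenEquiv g h h g := by
  have := nielsenEquiv_of_words g h ![.of 1, .of 0] ![.of 1, .of 0]
    (by intro i; fin_cases i <;> simp) (by intro i; fin_cases i <;> simp)
  simpa using this

theorem nielsenEquiv_inv_right (g h : G) : NielsenEquiv g h g h⁻¹ := by
  have := nielsenEquiv_of_words g h ![.of 0, (.of 1)⁻¹] ![.of 0, (.of 1)⁻¹]
    (by intro i; fin_cases i <;> simp) (by intro i; fin_cases i <;> simp)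
  simpa using this

theorem nielsenEquiv_mul_zpow (g h : G) (k : ℤ) : NielsenEquiv g h g (h * g ^ k) := by
  have := nielsenEquiv_of_words g h ![.of 0, .of 1 * .of 0 ^ k] ![.of 0, .of 1 * .of 0 ^ (-k)]
    (by intro i; fin_cases i <;> simp) (by intro i; fin_cases i <;> simp)
  simpa using this

theorem nielsenEquiv_zpow_mul (g h : G) (k : ℤ) : NielsenEquiv g h g (g ^ k * h) := by
  have h1 := (nielsenEquiv_inv_right g h).trans (nielsenEquiv_mul_zpow g h⁻¹ (-k))
  have h2 := h1.trans (nielsenEquiv_inv_right _ _)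
  simpa using h2

theorem nielsenEquiv_inv_left (g h : G) : NielsenEquiv g h g⁻¹ h :=
  ((nielsenEquiv_swap g h).trans (nielsenEquiv_inv_right h g)).trans (nielsenEquiv_swap _ _)

theorem range_lift_pair (g h : G) :
    (FreeGroup.lift ![g, h]).range = Subgroup.closure {g, h} := by
  rw [FreeGroup.range_lift_eq_closure]
  simp [Set.pair_comm]

theorem NielsenEquiv.closure_eq {a b c d : G} (h : NielsenEquiv a b c d) :
    Subgroup.closure {a, b} = Subgroup.closure {c, d} := by
  obtain ⟨φ, hφ⟩ := h
  rw [← range_lift_pair, ← range_lift_pair, hφ, MonoidHom.range_comp]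
  have : φ.toMonoidHom.range = ⊤ := MonoidHom.range_eq_top.2 φ.surjective
  rw [this, MonoidHom.range_eq_map]

end Nielsen

/-! ### Affine transformations of the rings `ℤ[ζ]` -/

/-- The ring `ℤ[ζ]` with `ζ² = tζ - 1`: for `t = -1, 0, 1` the element `ζ` is a primitive root
of unity of order `3, 4, 6`. -/
abbrev ZZeta (t : ℤ) := QuadraticAlgebra ℤ (-1) t

/-- The unit `ζ` of `ℤ[ζ]`, with inverse `t - ζ`. -/
def zeta (t : ℤ) : (ZZeta t)ˣ where
  val := ⟨0, 1⟩
  inv := ⟨t, -1⟩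
  val_inv := by ext <;> simp [QuadraticAlgebra.re_one, QuadraticAlgebra.im_one]
  inv_val := by ext <;> simp [QuadraticAlgebra.re_one, QuadraticAlgebra.im_one]

/-- The affine map `v ↦ rot * v + tr` of a commutative ring, with invertible linear part. -/
@[ext]
structure Aff (R : Type*) [CommRing R] where
  /-- The translation part. -/
  tr : R
  /-- The linear part. -/
  rot : Rˣ

namespace Aff

variable {R : Type*} [CommRing R]

instance : Mul (Aff R) := ⟨fun x y => ⟨x.tr + x.rot * y.tr, x.rot * y.rot⟩⟩
instance : One (Aff R) := ⟨⟨0, 1⟩⟩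
instance : Inv (Aff R) := ⟨fun x => ⟨-(x.rot⁻¹ : Rˣ) * x.tr, x.rot⁻¹⟩⟩

@[simp] theorem mul_tr (x y : Aff R) : (x * y).tr = x.tr + x.rot * y.tr := rfl
@[simp] theorem mul_rot (x y : Aff R) : (x * y).rot = x.rot * y.rot := rfl
@[simp] theorem one_tr : (1 : Aff R).tr = 0 := rfl
@[simp] theorem one_rot : (1 : Aff R).rot = 1 := rfl
@[simp] theorem inv_tr (x : Aff R) : (x⁻¹).tr = -(x.rot⁻¹ : Rˣ) * x.tr := rfl
@[simp] theorem inv_rot (x : Aff R) : (x⁻¹).rot = x.rot⁻¹ := rfl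

instance : Group (Aff R) := Group.ofLeftAxioms
  (fun x y z => by ext <;> simp <;> ring) (fun x => by ext <;> simp)
  (fun x => by ext <;> simp)

/-- The linear part, as a homomorphism. -/
def rotHom : Aff R →* Rˣ where
  toFun := rot
  map_one' := rfl
  map_mul' _ _ := rfl

theorem zpow_rot (x : Aff R) (k : ℤ) : (x ^ k).rot = x.rot ^ k := map_zpow rotHom x k

/-- The translations, as a homomorphism. -/
def trans : Multiplicative R →* Aff R where
  toFun z := ⟨z.toAdd, 1⟩
  map_one' := rfl
  map_mul' _ _ := by ext <;> simp

theorem zpow_of_rot_eq_one {x : Aff R} (hx : x.rot = 1) (k : ℤ) : x ^ k = ⟨k * x.tr, 1⟩ := by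
  have h : x = trans (Multiplicative.ofAdd x.tr) := by ext <;> simp [trans, hx]
  have h2 : trans (Multiplicative.ofAdd x.tr) ^ k = trans (Multiplicative.ofAdd (k • x.tr)) := by
    rw [← map_zpow]; rfl
  rw [h, h2]
  ext <;> simp [trans]

theorem zpow_of_tr_eq_zero {x : Aff R} (hx : x.tr = 0) (k : ℤ) : x ^ k = ⟨0, x.rot ^ k⟩ := by
  have h : ∀ k : ℤ, (x ^ k).tr = 0 := by
    intro k
    induction k using Int.induction_on with
    | zero => simp
    | succ i ih => rw [zpow_add_one, Aff.mul_tr, ih, hx]; simp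
    | pred i ih => rw [zpow_sub_one, Aff.mul_tr, ih]; simp [hx]
  ext
  · simp [h]
  · simp [zpow_rot]

end Aff

/-- The three admissible pairs (order of `ζ`, trace of `ζ`). -/
def Admissible (n : ℕ) (t : ℤ) : Prop := (n = 3 ∧ t = -1) ∨ (n = 4 ∧ t = 0) ∨ (n = 6 ∧ t = 1)

theorem orderOf_zeta {n : ℕ} {t : ℤ} (h : Admissible n t) : orderOf (zeta t) = n := by
  rcases h with ⟨rfl, rfl⟩ | ⟨rfl, rfl⟩ | ⟨rfl, rfl⟩ <;>
    refine (orderOf_eq_iff (by norm_num)).2 ⟨by decide, ?_⟩ <;>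
    intro m hm hm0 <;> interval_cases m <;> decide

/-- The units of `ℤ[ζ]` are the `±ζᵏ`. -/
theorem eq_zeta_pow_of_norm {n : ℕ} {t : ℤ} (hnt : Admissible n t) {b : ZZeta t}
    (hb : IsUnit (QuadraticAlgebra.norm b)) :
    ∃ k : ℤ, b = (zeta t ^ k : (ZZeta t)ˣ) ∨ b = -(zeta t ^ k : (ZZeta t)ˣ) := by
  obtain ⟨x, y⟩ := b
  rw [Int.isUnit_iff, QuadraticAlgebra.norm_def] at hb
  simp only at hb
  have key : ∀ x y : ℤ, x ∈ Finset.Icc (-1) 1 → y ∈ Finset.Icc (-1) 1 →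
      (x * x + t * x * y - -1 * y * y = 1 ∨ x * x + t * x * y - -1 * y * y = -1) →
      ∃ k ∈ Finset.range 3, (⟨x, y⟩ : ZZeta t) = (zeta t ^ k : (ZZeta t)ˣ) ∨
        (⟨x, y⟩ : ZZeta t) = -(zeta t ^ k : (ZZeta t)ˣ) := by
    intro x y hx hy
    simp only [Finset.mem_Icc] at hx hy
    obtain ⟨hx1, hx2⟩ := hx
    obtain ⟨hy1, hy2⟩ := hy
    rcases hnt with ⟨-, rfl⟩ | ⟨-, rfl⟩ | ⟨-, rfl⟩ <;> interval_cases x <;> interval_cases y <;>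
      decide
  have hbd : (x * x ≤ 1 ∧ y * y ≤ 1) := by
    -- `4(x² + txy + y²) = (2x + ty)² + (4 - t²)y²`, and symmetrically in `x` and `y`
    rcases hnt with ⟨-, rfl⟩ | ⟨-, rfl⟩ | ⟨-, rfl⟩ <;> rcases hb with hb | hb <;>
      constructor <;>
      nlinarith [sq_nonneg (2 * x - y), sq_nonneg (2 * y - x), sq_nonneg (2 * x + y),
        sq_nonneg (2 * y + x), sq_nonneg x, sq_nonneg y]
  obtain ⟨k, -, hk⟩ := key x y (by rw [Finset.mem_Icc]; constructor <;> nlinarith [hbd.1])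
    (by rw [Finset.mem_Icc]; constructor <;> nlinarith [hbd.2]) hb
  exact ⟨k, by simpa using hk⟩

/-- The only generators of a cyclic group of order `3`, `4` or `6` are the given one and its
inverse. -/
theorem zeta_zpow_eq {n : ℕ} {t : ℤ} (hnt : Admissible n t) {i m : ℤ}
    (h : (zeta t ^ i) ^ m = zeta t) : zeta t ^ i = zeta t ∨ zeta t ^ i = (zeta t)⁻¹ := by
  have ho := orderOf_zeta hnt
  have e1 : ∀ a b : ℤ, zeta t ^ a = zeta t ^ b ↔ (a : ZMod n) = b := by
    intro a b
    rw [zpow_eq_zpow_iff_modEq, ho, ZMod.intCast_eq_intCast_iff]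
  have h1 : ((i * m : ℤ) : ZMod n) = ((1 : ℤ) : ZMod n) := by
    rw [← e1, zpow_mul, h, zpow_one]
  have h2 : (i : ZMod n) = ((1 : ℤ) : ZMod n) ∨ (i : ZMod n) = ((-1 : ℤ) : ZMod n) := by
    push_cast at h1 ⊢
    generalize (i : ZMod n) = u at *
    generalize (m : ZMod n) = v at *
    rcases hnt with ⟨rfl, -⟩ | ⟨rfl, -⟩ | ⟨rfl, -⟩ <;> revert u v <;> decide
  rwa [← e1, ← e1, zpow_one, zpow_neg_one] at h2

/-! ### Faithfulness of the affine representation -/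

section Core

variable {G : Type*} [Group G]

/-- Conjugation by `c` acts on words in the commuting elements `X` and `Y` as multiplication by
`ζ` acts on coordinates. -/
theorem mul_normalForm {t : ℤ} {c X Y : G} (hY : c * X * c⁻¹ = Y) (hcomm : Commute X Y)
    (hrel : c * Y * c⁻¹ = X⁻¹ * Y ^ t) (a b k : ℤ) :
    c * (X ^ a * Y ^ b * c ^ k) = X ^ (-b) * Y ^ (a + t * b) * c ^ (k + 1) := by
  have h1 : c * X ^ a * c⁻¹ = Y ^ a := by rw [← hY, conj_zpow]
  have h2 : c * Y ^ b * c⁻¹ = X ^ (-b) * Y ^ (t * b) := by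
    rw [← conj_zpow, hrel, ((hcomm.zpow_right t).inv_left).mul_zpow, zpow_mul]
    simp
  calc c * (X ^ a * Y ^ b * c ^ k) = (c * X ^ a * c⁻¹) * (c * Y ^ b * c⁻¹) * c ^ (k + 1) := by
        rw [add_comm k 1, zpow_one_add]; group
    _ = _ := by
        rw [h1, h2, zpow_add Y, ← mul_assoc, ← mul_assoc, (hcomm.zpow_zpow (-b) a).eq]

theorem exists_normalForm {t : ℤ} {c X Y : G} (hY : c * X * c⁻¹ = Y) (hcomm : Commute X Y)
    (hrel : c * Y * c⁻¹ = X⁻¹ * Y ^ t) (hgen : Subgroup.closure {c, X} = ⊤) (x : G) :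
    ∃ a b k : ℤ, x = X ^ a * Y ^ b * c ^ k := by
  have hx : x ∈ Subgroup.closure {c, X} := by rw [hgen]; trivial
  induction hx using Subgroup.closure_induction_left with
  | one => exact ⟨0, 0, 0, by simp⟩
  | mul_left x hx y _ ih =>
    obtain ⟨a, b, k, rfl⟩ := ih
    rcases hx with rfl | rfl
    · exact ⟨_, _, _, mul_normalForm hY hcomm hrel a b k⟩
    · exact ⟨a + 1, b, k, by rw [add_comm a, zpow_one_add]; group⟩
  | inv_mul_cancel x hx y _ ih =>
    obtain ⟨a, b, k, rfl⟩ := ih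
    rcases hx with rfl | rfl
    · refine ⟨t * a + b, -a, k - 1, ?_⟩
      rw [inv_mul_eq_iff_eq_mul, mul_normalForm hY hcomm hrel]
      congr 3 <;> ring
    · exact ⟨a - 1, b, k, by rw [sub_eq_neg_add, zpow_add]; group⟩

/-- A group with the relations of `ℤ[ζ] ⋊ ⟨ζ⟩` embeds into the affine group as soon as it maps to
it in the expected way. -/
theorem injective_of_relations {n : ℕ} {t : ℤ} (hnt : Admissible n t) {c X : G}
    (hcn : c ^ n = 1) (hgen : Subgroup.closure {c, X} = ⊤)
    (hcomm : Commute X (c * X * c⁻¹))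
    (hrel : c * (c * X * c⁻¹) * c⁻¹ = X⁻¹ * (c * X * c⁻¹) ^ t)
    (f : G →* Aff (ZZeta t)) (hfc : f c = ⟨0, zeta t⟩) (hfX : f X = ⟨1, 1⟩) :
    Function.Injective f := by
  rw [injective_iff_map_eq_one]
  intro x hx
  obtain ⟨a, b, k, rfl⟩ := exists_normalForm rfl hcomm hrel hgen x
  have hfY : f (c * X * c⁻¹) = ⟨zeta t, 1⟩ := by
    rw [map_mul, map_mul, map_inv, hfc, hfX]
    ext1 <;> simp
  rw [map_mul, map_mul, map_zpow, map_zpow, map_zpow, hfX, hfY, hfc,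
    Aff.zpow_of_rot_eq_one rfl, Aff.zpow_of_rot_eq_one rfl, Aff.zpow_of_tr_eq_zero rfl] at hx
  have h1 := congrArg Aff.tr hx
  have h2 := congrArg Aff.rot hx
  simp only [Aff.mul_tr, Aff.mul_rot, Aff.one_tr, Aff.one_rot, one_mul, mul_one] at h1 h2
  have h3 := congrArg QuadraticAlgebra.re h1
  have h4 := congrArg QuadraticAlgebra.im h1
  simp [zeta] at h3 h4
  have h5 : c ^ k = 1 := by
    rw [← orderOf_dvd_iff_zpow_eq_one] at h2 ⊢
    rw [orderOf_zeta hnt] at h2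
    exact (Int.natCast_dvd_natCast.2 (orderOf_dvd_of_pow_eq_one hcn)).trans h2
  rw [h3, h4, h5]
  simp

/-! ### Reduction of generating pairs -/

/-- The Euclidean algorithm on the exponents of the linear parts makes the second element of a
pair a translation. -/
theorem exists_nielsenEquiv_rot_eq_one {t : ℤ} (f : G →* Aff (ZZeta t)) (i j : ℤ) (g h : G)
    (hg : (f g).rot = zeta t ^ i) (hh : (f h).rot = zeta t ^ j) :
    ∃ (g' h' : G) (i' : ℤ), NielsenEquiv g h g' h' ∧ (f g').rot = zeta t ^ i' ∧
      (f h').rot = 1 := by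
  induction hN : j.natAbs using Nat.strong_induction_on generalizing i j g h with
  | _ N ih =>
    by_cases hj : j = 0
    · subst hj
      exact ⟨g, h, i, ⟨MulEquiv.refl _, rfl⟩, hg, by simpa using hh⟩
    · have hlt : (i % j).natAbs < N := by
        have h1 := Int.emod_lt_abs i hj
        have h2 := Int.emod_nonneg i hj
        rw [Int.abs_eq_natAbs] at h1
        omega
      have hrot : (f (g * h ^ (-(i / j)))).rot = zeta t ^ (i % j) := by
        rw [map_mul, map_zpow, Aff.mul_rot, Aff.zpow_rot, hg, hh, ← zpow_mul, ← zpow_add]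
        congr 1
        rw [Int.emod_def]; ring
      obtain ⟨g', h', i', h1, h2, h3⟩ := ih _ hlt j (i % j) h (g * h ^ (-(i / j))) hh hrot rfl
      exact ⟨g', h', i', ((nielsenEquiv_swap g h).trans (nielsenEquiv_mul_zpow _ _ _)).trans h1,
        h2, h3⟩

/-- If `g` is a rotation by `ζ` and `h` a translation by `b`, and the two generate a group which
contains the translation by `1`, then `b` is a unit. Since `(1 - ζ) z - a (1 - u)` is a cocycle in
`(z, u)` vanishing on `g = (a, ζ)`, it takes on the whole group values divisible by its value
`(1 - ζ) b` on `h`; on the translation by `1` it is `1 - ζ`. -/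
theorem isUnit_norm_of_closure {n : ℕ} {t : ℤ} (hnt : Admissible n t) (f : G →* Aff (ZZeta t))
    {g h X : G} (hgh : Subgroup.closure {g, h} = ⊤) (hfX : f X = ⟨1, 1⟩)
    (hg : (f g).rot = zeta t) (hh : (f h).rot = 1) :
    IsUnit (QuadraticAlgebra.norm (f h).tr) := by
  have key : ∀ x ∈ Subgroup.closure {g, h}, (1 - (zeta t : ZZeta t)) * (f h).tr ∣
      (1 - (zeta t : ZZeta t)) * (f x).tr - (f g).tr * (1 - ((f x).rot : ZZeta t)) := by
    intro x hx
    induction hx using Subgroup.closure_induction with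
    | mem x hx =>
      rcases hx with rfl | rfl
      · rw [hg, mul_comm (f x).tr, sub_self]; exact dvd_zero _
      · simp [hh]
    | one => simp
    | mul x y _ _ hx hy =>
      have := dvd_add hx (hy.mul_left ((f x).rot : ZZeta t))
      convert this using 1
      simp only [map_mul, Aff.mul_tr, Aff.mul_rot, Units.val_mul]
      ring
    | inv x _ hx =>
      have := hx.mul_left (-((f x).rot⁻¹ : (ZZeta t)ˣ) : ZZeta t)
      convert this using 1
      simp only [map_inv, Aff.inv_tr, Aff.inv_rot]
      have := Units.inv_mul (f x).rot
      linear_combination (f g).tr * this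
  obtain ⟨β, hβ⟩ := key X (by rw [hgh]; trivial)
  rw [hfX] at hβ
  simp only [mul_one, Units.val_one, sub_self, mul_zero, sub_zero] at hβ
  have hN := congrArg QuadraticAlgebra.norm hβ
  rw [map_mul, map_mul] at hN
  have hne : QuadraticAlgebra.norm (1 - (zeta t : ZZeta t)) ≠ 0 := by
    rcases hnt with ⟨-, rfl⟩ | ⟨-, rfl⟩ | ⟨-, rfl⟩ <;> decide
  refine IsUnit.of_mul_eq_one (QuadraticAlgebra.norm β) ?_
  exact mul_left_cancel₀ hne (by linear_combination -hN)

/-- Every generating pair reduces to the rotation `c` by `ζ` about `0` and the translation `X`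
by `1`. -/
theorem nielsenEquiv_standard {n : ℕ} {t : ℤ} (hnt : Admissible n t) {c X : G}
    (hcn : c ^ n = 1) (hgen : Subgroup.closure {c, X} = ⊤)
    (hcomm : Commute X (c * X * c⁻¹))
    (hrel : c * (c * X * c⁻¹) * c⁻¹ = X⁻¹ * (c * X * c⁻¹) ^ t)
    (f : G →* Aff (ZZeta t)) (hfc : f c = ⟨0, zeta t⟩) (hfX : f X = ⟨1, 1⟩)
    (g h : G) (hgh : Subgroup.closure {g, h} = ⊤) : NielsenEquiv g h c X := by
  have hinj := injective_of_relations hnt hcn hgen hcomm hrel f hfc hfX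
  have hrots : ∀ x : G, ∃ i : ℤ, (f x).rot = zeta t ^ i := by
    intro x
    obtain ⟨a, b, k, rfl⟩ := exists_normalForm rfl hcomm hrel hgen x
    exact ⟨k, by simp [Aff.zpow_rot, hfc, hfX]⟩
  obtain ⟨i, hi⟩ := hrots g
  obtain ⟨j, hj⟩ := hrots h
  obtain ⟨g₁, h₁, i₁, e₁, hg₁, hh₁⟩ := exists_nielsenEquiv_rot_eq_one f i j g h hi hj
  -- the linear part of the first element generates, hence is `ζ` or its inverse
  have hcl₁ : Subgroup.closure {g₁, h₁} = ⊤ := e₁.closure_eq ▸ hgh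
  obtain ⟨m, hm⟩ : ∃ m : ℤ, (zeta t ^ i₁) ^ m = zeta t := by
    have hle : Subgroup.closure {g₁, h₁} ≤
        (Subgroup.zpowers (zeta t ^ i₁)).comap (Aff.rotHom.comp f) := by
      rw [Subgroup.closure_le]
      rintro x (rfl | rfl)
      · exact ⟨1, by simp [Aff.rotHom, hg₁]⟩
      · exact ⟨0, by simp [Aff.rotHom, hh₁]⟩
    have hc : c ∈ Subgroup.closure {g₁, h₁} := by rw [hcl₁]; trivial
    obtain ⟨m, hm⟩ := hle hc
    exact ⟨m, by simpa [Aff.rotHom, hfc] using hm⟩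
  obtain ⟨g₂, e₂, hg₂⟩ : ∃ g₂, NielsenEquiv g h g₂ h₁ ∧ (f g₂).rot = zeta t := by
    rcases zeta_zpow_eq hnt hm with hz | hz
    · exact ⟨g₁, e₁, hg₁.trans hz⟩
    · exact ⟨g₁⁻¹, e₁.trans (nielsenEquiv_inv_left _ _), by simp [hg₁, hz]⟩
  have hcl₂ : Subgroup.closure {g₂, h₁} = ⊤ := e₂.closure_eq ▸ hgh
  -- conjugating and inverting the translation turns it into `X`
  obtain ⟨k, hk⟩ := eq_zeta_pow_of_norm hnt (isUnit_norm_of_closure hnt f hcl₂ hfX hg₂ hh₁)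
  have e₃ : NielsenEquiv g h g₂ (g₂ ^ (-k) * h₁ * g₂ ^ k) := by
    exact (e₂.trans (nielsenEquiv_zpow_mul _ _ (-k))).trans (nielsenEquiv_mul_zpow _ _ k)
  have hrot₃ : (f (g₂ ^ (-k) * h₁ * g₂ ^ k)).rot = 1 := by
    simp [Aff.zpow_rot, hh₁]
  have htr₃ : (f (g₂ ^ (-k) * h₁ * g₂ ^ k)).tr = ((zeta t ^ k)⁻¹ : (ZZeta t)ˣ) * (f h₁).tr := by
    have hconj : f (g₂ ^ (-k) * h₁ * g₂ ^ k) = (f g₂ ^ k)⁻¹ * f h₁ * f g₂ ^ k := by simp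
    rw [hconj]
    simp only [Aff.mul_tr, Aff.mul_rot, Aff.inv_tr, Aff.inv_rot, Aff.zpow_rot, hg₂, hh₁, mul_one]
    ring
  have e₄ : NielsenEquiv g h g₂ X := by
    rcases hk with hk | hk
    · have : g₂ ^ (-k) * h₁ * g₂ ^ k = X := by
        apply hinj
        rw [hfX]
        ext1
        · rw [htr₃, hk]; simp
        · exact hrot₃
      rwa [this] at e₃
    · have : (g₂ ^ (-k) * h₁ * g₂ ^ k)⁻¹ = X := by
        apply hinj
        rw [hfX, map_inv]
        ext1
        · rw [Aff.inv_tr, hrot₃, htr₃, hk]; simp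
        · rw [Aff.inv_rot, hrot₃, inv_one]
      have e := e₃.trans (nielsenEquiv_inv_right _ _)
      rwa [this] at e
  -- multiplying by powers of `X` on both sides moves the fixed point of the rotation to `0`
  have e₅ : NielsenEquiv g h X (X ^ (-(f g₂).tr.re) * g₂ * X ^ (-(f g₂).tr.im)) :=
    ((e₄.trans (nielsenEquiv_swap _ _)).trans (nielsenEquiv_zpow_mul _ _ _)).trans
      (nielsenEquiv_mul_zpow _ _ _)
  have : X ^ (-(f g₂).tr.re) * g₂ * X ^ (-(f g₂).tr.im) = c := by
    apply hinj
    rw [hfc, map_mul, map_mul, map_zpow, map_zpow, hfX, Aff.zpow_of_rot_eq_one rfl,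
      Aff.zpow_of_rot_eq_one rfl]
    ext1
    · simp only [Aff.mul_tr, Aff.mul_rot, hg₂, one_mul]
      ext <;> simp [zeta]
    · simp [hg₂]
  rw [this] at e₅
  exact e₅.trans (nielsenEquiv_swap _ _)

end Core

/-! ### The three triangle groups -/

section Triangle

theorem t₁_pow (p q r : ℕ) : t₁ p q r ^ p = 1 :=
  PresentedGroup.one_of_mem (rels := triangleRels p q r) (x := FreeGroup.of 0 ^ p)
    (by simp [triangleRels])

theorem t₂_pow (p q r : ℕ) : t₂ p q r ^ q = 1 :=
  PresentedGroup.one_of_mem (rels := triangleRels p q r) (x := FreeGroup.of 1 ^ q)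
    (by simp [triangleRels])

theorem t₁_mul_t₂_pow (p q r : ℕ) : (t₁ p q r * t₂ p q r) ^ r = 1 :=
  PresentedGroup.one_of_mem (rels := triangleRels p q r)
    (x := (FreeGroup.of 0 * FreeGroup.of 1) ^ r) (by simp [triangleRels])

theorem closure_t (p q r : ℕ) : Subgroup.closure {t₁ p q r, t₂ p q r} = ⊤ := by
  rw [← PresentedGroup.closure_range_of (triangleRels p q r)]
  congr 1
  ext x
  simp [t₁, t₂, eq_comm]

theorem exists_hom {H : Type*} [Group H] {p q r : ℕ} (a b : H) (ha : a ^ p = 1) (hb : b ^ q = 1)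
    (hab : (a * b) ^ r = 1) :
    ∃ f : Triangle p q r →* H, f (t₁ p q r) = a ∧ f (t₂ p q r) = b := by
  refine ⟨PresentedGroup.toGroup (f := ![a, b]) ?_, ?_, ?_⟩
  · rintro x (rfl | rfl | rfl) <;> simp [ha, hb, hab]
  · exact PresentedGroup.toGroup.of _
  · exact PresentedGroup.toGroup.of _

/-- If all generating pairs are equivalent to one fixed pair, they are equivalent to `(s₁, s₂)`. -/
theorem nielsenEquiv_t {p q r : ℕ} {c X : Triangle p q r}
    (H : ∀ g h : Triangle p q r, Subgroup.closure {g, h} = ⊤ → NielsenEquiv g h c X)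
    (g h : Triangle p q r) (hgh : Subgroup.closure {g, h} = ⊤) :
    NielsenEquiv g h (t₁ p q r) (t₂ p q r) :=
  (H g h hgh).trans (H _ _ (closure_t p q r)).symm

theorem relations_333 {G : Type*} [Group G] {c b : G} (hc : c ^ 3 = 1) (hb : b ^ 3 = 1)
    (hcb : (c * b) ^ 3 = 1) :
    Commute (b * c⁻¹) (c * (b * c⁻¹) * c⁻¹) ∧
      c * (c * (b * c⁻¹) * c⁻¹) * c⁻¹ = (b * c⁻¹)⁻¹ * (c * (b * c⁻¹) * c⁻¹) ^ (-1 : ℤ) := by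
  have hc' : c⁻¹ * c⁻¹ = c := by
    calc c⁻¹ * c⁻¹ = c⁻¹ * c⁻¹ * c ^ 3 * 1 := by rw [hc]; simp
      _ = c := by simp [pow_succ, mul_assoc]
  have hc3 : (c ^ 3)⁻¹ = 1 := by rw [hc, inv_one]
  -- with `X`, `Y`, `Z` the translations along the three directions, `XYZ = b³` and `YXZ = (cb)³`
  have hXYZ : (b * c⁻¹) * (c * (b * c⁻¹) * c⁻¹) * (c * (c * (b * c⁻¹) * c⁻¹) * c⁻¹) = 1 := by
    calc _ = b ^ 3 * (c ^ 3)⁻¹ := by simp [pow_succ, mul_assoc]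
      _ = 1 := by rw [hb, hc3, one_mul]
  have hYXZ : (c * (b * c⁻¹) * c⁻¹) * (b * c⁻¹) * (c * (c * (b * c⁻¹) * c⁻¹) * c⁻¹) = 1 := by
    calc _ = c * b * (c⁻¹ * c⁻¹) * b * c * b * (c ^ 3)⁻¹ := by simp [pow_succ, mul_assoc]
      _ = (c * b) ^ 3 := by rw [hc', hc3]; simp [pow_succ, mul_assoc]
      _ = 1 := hcb
  refine ⟨mul_right_cancel (hXYZ.trans hYXZ.symm), ?_⟩
  rw [zpow_neg_one, ← mul_inv_rev]
  exact eq_inv_of_mul_eq_one_right hYXZ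

theorem relations_244 {G : Type*} [Group G] {a c : G} (ha : a ^ 2 = 1) (hc : c ^ 4 = 1)
    (hac : (a * c) ^ 4 = 1) :
    Commute (a * c ^ 2) (c * (a * c ^ 2) * c⁻¹) ∧
      c * (c * (a * c ^ 2) * c⁻¹) * c⁻¹ = (a * c ^ 2)⁻¹ * (c * (a * c ^ 2) * c⁻¹) ^ (0 : ℤ) := by
  have ha' : a⁻¹ = a := inv_eq_of_mul_eq_one_left (by rw [← pow_two, ha])
  have hc' : c ^ 2 = (c ^ 2)⁻¹ := eq_inv_of_mul_eq_one_left (by rw [← pow_add, hc])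
  have hc3 : c ^ 3 = c⁻¹ := eq_inv_of_mul_eq_one_left (by rw [← pow_succ, hc])
  constructor
  · have h1 : (a * c) ^ 2 = (c⁻¹ * a) ^ 2 := by
      calc (a * c) ^ 2 = (a * c) ^ 4 * ((a * c) ^ 2)⁻¹ := by simp [pow_succ, mul_assoc]
        _ = (c⁻¹ * a⁻¹) ^ 2 := by rw [hac]; simp [pow_succ, mul_assoc]
        _ = _ := by rw [ha']
    calc a * c ^ 2 * (c * (a * c ^ 2) * c⁻¹) = a * c ^ 3 * a * c := by simp [pow_succ, mul_assoc]
      _ = c * (c⁻¹ * a) ^ 2 * c := by rw [hc3]; simp [pow_succ, mul_assoc]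
      _ = c * (a * c) ^ 2 * c := by rw [h1]
      _ = _ := by simp [pow_succ, mul_assoc]
  · calc _ = c ^ 2 * a := by simp [pow_succ, mul_assoc]
      _ = (c ^ 2)⁻¹ * a⁻¹ := by rw [ha', ← hc']
      _ = _ := by simp [pow_succ, mul_assoc]

theorem relations_236 {G : Type*} [Group G] {a c : G} (ha : a ^ 2 = 1) (hc : c ^ 6 = 1)
    (hac : (a * c) ^ 3 = 1) :
    Commute (a * c ^ 3) (c * (a * c ^ 3) * c⁻¹) ∧
      c * (c * (a * c ^ 3) * c⁻¹) * c⁻¹ = (a * c ^ 3)⁻¹ * (c * (a * c ^ 3) * c⁻¹) ^ (1 : ℤ) := by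
  have ha' : a⁻¹ = a := inv_eq_of_mul_eq_one_left (by rw [← pow_two, ha])
  have hc' : c ^ 3 = (c ^ 3)⁻¹ := eq_inv_of_mul_eq_one_left (by rw [← pow_add, hc])
  have hc5 : c ^ 5 = c⁻¹ := eq_inv_of_mul_eq_one_left (by rw [← pow_succ, hc])
  -- `Y = X Z`, where `Z = c Y c⁻¹`
  have h1 : (a * c ^ 3) * (c * (c * (a * c ^ 3) * c⁻¹) * c⁻¹) = c * (a * c ^ 3) * c⁻¹ := by
    have h2 : a * c⁻¹ * a = c * a * c := by
      calc a * c⁻¹ * a = a⁻¹ * c⁻¹ * a⁻¹ := by rw [ha']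
        _ = a⁻¹ * (a * c) ^ 3 * c⁻¹ * a⁻¹ := by rw [hac, mul_one]
        _ = _ := by simp [pow_succ, mul_assoc]
    calc _ = a * c ^ 5 * a * c := by simp [pow_succ, mul_assoc]
      _ = c * a * c * c := by rw [hc5, h2]
      _ = _ := by simp [pow_succ, mul_assoc]
  have hZ : c * (c * (a * c ^ 3) * c⁻¹) * c⁻¹ = (a * c ^ 3)⁻¹ * (c * (a * c ^ 3) * c⁻¹) :=
    eq_inv_mul_of_mul_eq h1
  -- `c³` inverts `X`, so conjugating `Y = X Z` by `c` yields `Z = Y X⁻¹`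
  have h3 : c * (c * (c * (a * c ^ 3) * c⁻¹) * c⁻¹) * c⁻¹ = (a * c ^ 3)⁻¹ := by
    calc _ = c ^ 3 * a := by simp [pow_succ, mul_assoc]
      _ = (c ^ 3)⁻¹ * a⁻¹ := by rw [ha', ← hc']
      _ = _ := by simp [pow_succ, mul_assoc]
  refine ⟨?_, by rw [zpow_one, hZ]⟩
  generalize a * c ^ 3 = X at *
  have h4 : c * X * c⁻¹ * X⁻¹ = X⁻¹ * (c * X * c⁻¹) := by
    calc c * X * c⁻¹ * X⁻¹ = c * X * c⁻¹ * (c * (c * (c * X * c⁻¹) * c⁻¹) * c⁻¹) := by rw [h3]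
      _ = c * (X * (c * (c * X * c⁻¹) * c⁻¹)) * c⁻¹ := by simp [mul_assoc]
      _ = c * (c * X * c⁻¹) * c⁻¹ := by rw [h1]
      _ = _ := hZ
  exact (Commute.inv_left_iff (a := X) (b := c * X * c⁻¹)).1 h4.symm

/-- In `Δ(3,3,3)`, `c = s₁` is the rotation by `ζ` about `0` and `X = s₂ s₁⁻¹` the translation
by `1`. -/
theorem nielsenEquiv_333 (g h : Triangle 3 3 3) (hgh : Subgroup.closure {g, h} = ⊤) :
    NielsenEquiv g h (t₁ 3 3 3) (t₂ 3 3 3) := by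
  obtain ⟨f, hf1, hf2⟩ := exists_hom (p := 3) (q := 3) (r := 3)
    (⟨0, zeta (-1)⟩ : Aff (ZZeta (-1))) ⟨1, zeta (-1)⟩
    (by ext1 <;> decide) (by ext1 <;> decide) (by ext1 <;> decide)
  obtain ⟨hcomm, hrel⟩ :=
    relations_333 (t₁_pow 3 3 3) (t₂_pow 3 3 3) (t₁_mul_t₂_pow 3 3 3)
  have hgen : Subgroup.closure {t₁ 3 3 3, t₂ 3 3 3 * (t₁ 3 3 3)⁻¹} = ⊤ := by
    have e := nielsenEquiv_mul_zpow (t₁ 3 3 3) (t₂ 3 3 3) (-1)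
    rw [zpow_neg_one] at e
    rw [← e.closure_eq, closure_t]
  refine nielsenEquiv_t (nielsenEquiv_standard (n := 3) (t := -1) (.inl ⟨rfl, rfl⟩) (t₁_pow 3 3 3)
    hgen hcomm hrel f hf1 ?_) g h hgh
  rw [map_mul, map_inv, hf1, hf2]
  ext1 <;> decide

/-- The generating pair `(s₁ s₂, s₁ (s₁ s₂)ᵏ)` used for the triples with `p = 2`. -/
theorem closure_standard (p q r k : ℕ) :
    Subgroup.closure {t₁ p q r * t₂ p q r, t₁ p q r * (t₁ p q r * t₂ p q r) ^ k} = ⊤ := by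
  have e := ((nielsenEquiv_zpow_mul (t₁ p q r) (t₂ p q r) 1).trans (nielsenEquiv_swap _ _)).trans
    (nielsenEquiv_mul_zpow _ _ k)
  rw [zpow_one, zpow_natCast] at e
  rw [← e.closure_eq, closure_t]

/-- In `Δ(2,3,6)`, `c = s₁ s₂` is the rotation by `ζ` about `0`, `s₁` is `v ↦ 1 - v`, and
`X = s₁ c³` is the translation by `1`. -/
theorem nielsenEquiv_236 (g h : Triangle 2 3 6) (hgh : Subgroup.closure {g, h} = ⊤) :
    NielsenEquiv g h (t₁ 2 3 6) (t₂ 2 3 6) := by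
  obtain ⟨f, hf1, hf2⟩ := exists_hom (p := 2) (q := 3) (r := 6)
    (⟨1, -1⟩ : Aff (ZZeta 1)) ⟨1, -zeta 1⟩
    (by ext1 <;> decide) (by ext1 <;> decide) (by ext1 <;> decide)
  have ha := t₁_pow 2 3 6
  obtain ⟨hcomm, hrel⟩ := relations_236 ha (t₁_mul_t₂_pow 2 3 6)
    (by rw [← mul_assoc, ← pow_two, ha, one_mul, t₂_pow])
  refine nielsenEquiv_t (nielsenEquiv_standard (n := 6) (t := 1) (.inr (.inr ⟨rfl, rfl⟩))
    (t₁_mul_t₂_pow 2 3 6) (closure_standard 2 3 6 3) hcomm hrel f ?_ ?_) g h hgh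
  · rw [map_mul, hf1, hf2]
    ext1 <;> decide
  · rw [map_mul, map_pow, map_mul, hf1, hf2]
    ext1 <;> decide

/-- In `Δ(2,4,4)`, `c = s₁ s₂` is the rotation by `ζ` about `0`, `s₁` is `v ↦ 1 - v`, and
`X = s₁ c²` is the translation by `1`. -/
theorem nielsenEquiv_244 (g h : Triangle 2 4 4) (hgh : Subgroup.closure {g, h} = ⊤) :
    NielsenEquiv g h (t₁ 2 4 4) (t₂ 2 4 4) := by
  obtain ⟨f, hf1, hf2⟩ := exists_hom (p := 2) (q := 4) (r := 4)
    (⟨1, -1⟩ : Aff (ZZeta 0)) ⟨1, -zeta 0⟩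
    (by ext1 <;> decide) (by ext1 <;> decide) (by ext1 <;> decide)
  have ha := t₁_pow 2 4 4
  obtain ⟨hcomm, hrel⟩ := relations_244 ha (t₁_mul_t₂_pow 2 4 4)
    (by rw [← mul_assoc, ← pow_two, ha, one_mul, t₂_pow])
  refine nielsenEquiv_t (nielsenEquiv_standard (n := 4) (t := 0) (.inr (.inl ⟨rfl, rfl⟩))
    (t₁_mul_t₂_pow 2 4 4) (closure_standard 2 4 4 2) hcomm hrel f ?_ ?_) g h hgh
  · rw [map_mul, hf1, hf2]
    ext1 <;> decide
  · rw [map_mul, map_pow, map_mul, hf1, hf2]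
    ext1 <;> decide

end Triangle

theorem stmt4 (p q r : ℕ)
    (hpqr : (p, q, r) = (3, 3, 3) ∨ (p, q, r) = (2, 3, 6) ∨ (p, q, r) = (2, 4, 4))
    (g h : Triangle p q r)
    (hgen : Subgroup.closure {g, h} = ⊤) :
    NielsenEquiv g h (t₁ p q r) (t₂ p q r) := by
  simp only [Prod.mk.injEq] at hpqr
  rcases hpqr with ⟨rfl, rfl, rfl⟩ | ⟨rfl, rfl, rfl⟩ | ⟨rfl, rfl, rfl⟩
  · exact nielsenEquiv_333 g h hgen
  · exact nielsenEquiv_236 g h hgen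
  · exact nielsenEquiv_244 g h hgen
end
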